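/- arXiv:1910.09539 — 2 statements merged into one kernel-verified Lean document; each statement's English description precedes it below -/
import Mathlib

section
/- Let H be any Hermitian matrix on ℂ^(2^(N/2)), L(A) := i[H, A], O₀ a matrix with (O₀|O₀) = 1, O(t) := e^{iHt} O₀ e^{−iHt}, and P_s(t) := (O(t)| Q_s O(t)) for 0 ≤ s ≤ N. For 0 ≤ s < s′ ≤ N set 𝒦_{s′s} := ‖Q_{s′} ∘ L ∘ Q_s‖ (the operator norm induced by ‖·‖). Then there exist functions K_{s′s} : ℝ → ℝ with |K_{s′s}(t)| ≤ 𝒦_{s′s} for all t, such that for every s and every t, the derivative of P_s satisfies P_s′(t) = 2·√(P_s(t))·( Σ_{s′ < s} K_{s s′}(t)·√(P_{s′}(t)) − Σ_{s′ > s} K_{s′ s}(t)·√(P_{s′}(t)) ). -/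
open Matrix

/-- The ordered product `ψ_Y = ∏_{i ∈ Y} ψ_i` (indices in increasing order), with `ψ_∅ = 1`. -/
noncomputable def psiProd {N : ℕ} (ψ : Fin N → Matrix (Fin (2 ^ (N / 2))) (Fin (2 ^ (N / 2))) ℂ)
    (Y : Finset (Fin N)) : Matrix (Fin (2 ^ (N / 2))) (Fin (2 ^ (N / 2))) ℂ :=
  ((Y.sort (· ≤ ·)).map ψ).prod

/-- The inner product `(A|B) := 2^(−N/2) · tr(A† B)`. -/
noncomputable def mInner (N : ℕ) (A B : Matrix (Fin (2 ^ (N / 2))) (Fin (2 ^ (N / 2))) ℂ) : ℂ :=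
  ((2 : ℂ) ^ (N / 2))⁻¹ * (Aᴴ * B).trace

/-- The norm `‖A‖ := √(A|A)`. -/
noncomputable def mNorm (N : ℕ) (A : Matrix (Fin (2 ^ (N / 2))) (Fin (2 ^ (N / 2))) ℂ) : ℝ :=
  Real.sqrt (mInner N A A).re

/-- The operator norm (induced by `mNorm`) of a linear map on the matrix algebra. -/
noncomputable def opNorm (N : ℕ)
    (T : Matrix (Fin (2 ^ (N / 2))) (Fin (2 ^ (N / 2))) ℂ →ₗ[ℂ]
      Matrix (Fin (2 ^ (N / 2))) (Fin (2 ^ (N / 2))) ℂ) : ℝ :=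
  sSup {r : ℝ | ∃ A, A ≠ 0 ∧ r = mNorm N (T A) / mNorm N A}

/-- The span of `{ψ_Y : |Y| = s}`, i.e. the space of operators of size `s`. -/
noncomputable def sizeSpan {N : ℕ} (ψ : Fin N → Matrix (Fin (2 ^ (N / 2))) (Fin (2 ^ (N / 2))) ℂ)
    (s : ℕ) : Submodule ℂ (Matrix (Fin (2 ^ (N / 2))) (Fin (2 ^ (N / 2))) ℂ) :=
  Submodule.span ℂ {M | ∃ Y : Finset (Fin N), Y.card = s ∧ M = psiProd ψ Y}

/-- The Liouvillian `L(A) := i[H, A]`. -/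
noncomputable def liou {N : ℕ} (H : Matrix (Fin (2 ^ (N / 2))) (Fin (2 ^ (N / 2))) ℂ) :
    Matrix (Fin (2 ^ (N / 2))) (Fin (2 ^ (N / 2))) ℂ →ₗ[ℂ]
      Matrix (Fin (2 ^ (N / 2))) (Fin (2 ^ (N / 2))) ℂ :=
  Complex.I • (LinearMap.mulLeft ℂ H - LinearMap.mulRight ℂ H)

/-- Heisenberg evolution `O(t) := e^{iHt} O₀ e^{−iHt}`. -/
noncomputable def heis {N : ℕ} (H O₀ : Matrix (Fin (2 ^ (N / 2))) (Fin (2 ^ (N / 2))) ℂ)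
    (t : ℝ) : Matrix (Fin (2 ^ (N / 2))) (Fin (2 ^ (N / 2))) ℂ :=
  NormedSpace.exp ((Complex.I * t) • H) * O₀ * NormedSpace.exp ((-(Complex.I * t)) • H)

/-- The matrix algebra on which everything lives. -/
abbrev MM (N : ℕ) : Type := Matrix (Fin (2 ^ (N / 2))) (Fin (2 ^ (N / 2))) ℂ

open scoped ComplexOrder in
/-- `mInner` as an inner product core. -/
noncomputable abbrev mCore (N : ℕ) : InnerProductSpace.Core ℂ (MM N) where
  inner A B := mInner N A B
  conj_inner_symm A B := by
    have h : (Aᴴ * B).trace = star ((Bᴴ * A).trace) := by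
      rw [← Matrix.trace_conjTranspose, Matrix.conjTranspose_mul,
        Matrix.conjTranspose_conjTranspose]
    simp only [mInner, h, map_mul, map_inv₀, map_pow, map_ofNat]
    rfl
  re_inner_nonneg A := by
    have h := (Matrix.posSemidef_conjTranspose_mul_self A).trace_nonneg
    have h2 : (0 : ℂ) ≤ ((2 : ℂ) ^ (N / 2))⁻¹ := by
      have : ((2 : ℂ) ^ (N / 2))⁻¹ = (((2 : ℝ) ^ (N / 2))⁻¹ : ℝ) := by push_cast; rfl
      rw [this]
      exact_mod_cast (by positivity : (0 : ℝ) ≤ ((2 : ℝ) ^ (N / 2))⁻¹)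
    exact (Complex.le_def.1 (mul_nonneg h2 h)).1
  add_left A B C := by
    simp [mInner, Matrix.add_mul, mul_add]
  smul_left A B r := by
    simp [mInner]; ring
  definite A h := by
    have h' : ((2 : ℂ) ^ (N / 2))⁻¹ * (Aᴴ * A).trace = 0 := h
    have : (Aᴴ * A).trace = 0 := by
      rcases mul_eq_zero.1 h' with h | h
      · simp at h
      · exact h
    exact Matrix.trace_conjTranspose_mul_self_eq_zero_iff.1 this

theorem mInner_re_le (N : ℕ) (A B : MM N) : |(mInner N A B).re| ≤ mNorm N A * mNorm N B := by
  let := mCore N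
  refine (Complex.abs_re_le_norm _).trans ?_
  exact InnerProductSpace.Core.norm_inner_le_norm (𝕜 := ℂ) A B

theorem core_bound {V : Type} [AddCommGroup V] [Module ℂ V] [FiniteDimensional ℂ V]
    (c : InnerProductSpace.Core ℂ V) (T : V →ₗ[ℂ] V) :
    ∃ C : ℝ, ∀ A, Real.sqrt (c.inner (T A) (T A)).re ≤ C * Real.sqrt (c.inner A A).re := by
  let i1 : NormedAddCommGroup V := c.toNormedAddCommGroup
  let i2 : InnerProductSpace ℂ V := InnerProductSpace.ofCore c.toCore
  refine ⟨‖LinearMap.toContinuousLinearMap T‖, fun A => ?_⟩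
  exact (LinearMap.toContinuousLinearMap T).le_opNorm A

theorem exists_bound (N : ℕ) (T : (MM N) →ₗ[ℂ] (MM N)) :
    ∃ C : ℝ, ∀ A, mNorm N (T A) ≤ C * mNorm N A :=
  core_bound (mCore N) T

theorem mInner_symm (N : ℕ) (A B : MM N) : star (mInner N B A) = mInner N A B :=
  (mCore N).conj_inner_symm A B

theorem mInner_symm_re (N : ℕ) (A B : MM N) : (mInner N A B).re = (mInner N B A).re := by
  rw [← mInner_symm]; simp

theorem mInner_add_right (N : ℕ) (A B C : MM N) :
    mInner N A (B + C) = mInner N A B + mInner N A C := by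
  simp [mInner, Matrix.mul_add, mul_add]

theorem mInner_sub_right (N : ℕ) (A B C : MM N) :
    mInner N A (B - C) = mInner N A B - mInner N A C := by
  simp [mInner, Matrix.mul_sub, mul_sub]

theorem mInner_smul_right (N : ℕ) (A B : MM N) (r : ℂ) :
    mInner N A (r • B) = r * mInner N A B := by
  simp [mInner]; ring

theorem mInner_sum_right (N : ℕ) {ι : Type*} (A : MM N) (S : Finset ι) (f : ι → MM N) :
    mInner N A (∑ i ∈ S, f i) = ∑ i ∈ S, mInner N A (f i) := by
  simp [mInner, Matrix.mul_sum, Finset.mul_sum, Matrix.trace_sum]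

theorem mInner_self_nonneg (N : ℕ) (A : MM N) : 0 ≤ (mInner N A A).re :=
  (mCore N).re_inner_nonneg A

theorem mNorm_pos (N : ℕ) (A : MM N) (h : A ≠ 0) : 0 < mNorm N A := by
  refine lt_of_le_of_ne (Real.sqrt_nonneg _) fun h0 => h ?_
  have h1 : (mInner N A A).re = 0 := (Real.sqrt_eq_zero (mInner_self_nonneg N A)).1 h0.symm
  apply (mCore N).definite
  have h2 := mInner_symm N A A
  change mInner N A A = 0
  apply Complex.ext h1
  exact Complex.conj_eq_iff_im.1 h2

theorem le_opNorm_mul (N : ℕ) (T : (MM N) →ₗ[ℂ] (MM N)) (A : MM N) :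
    mNorm N (T A) ≤ opNorm N T * mNorm N A := by
  by_cases h : A = 0
  · subst h
    simp [mNorm, mInner]
  · have hp := mNorm_pos N A h
    rw [← div_le_iff₀ hp]
    obtain ⟨C, hC⟩ := exists_bound N T
    apply le_csSup
    · refine ⟨C, ?_⟩
      rintro r ⟨B, hB, rfl⟩
      rw [div_le_iff₀ (mNorm_pos N B hB)]
      exact hC B
    · exact ⟨A, h, rfl⟩

theorem opNorm_nonneg_aux (N : ℕ) (T : (MM N) →ₗ[ℂ] (MM N)) : 0 ≤ opNorm N T := by
  apply Real.sSup_nonneg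
  rintro r ⟨B, hB, rfl⟩
  exact div_nonneg (Real.sqrt_nonneg _) (Real.sqrt_nonneg _)

theorem liou_anti (N : ℕ) (H : MM N) (hH : H.IsHermitian) (A B : MM N) :
    (mInner N A (liou H B)).re = - (mInner N B (liou H A)).re := by
  rw [mInner_symm_re N B, ← Complex.neg_re]
  congr 1
  have hc : (Aᴴ * (B * H)).trace = (H * (Aᴴ * B)).trace := by
    rw [← Matrix.mul_assoc, Matrix.trace_mul_comm]
  simp only [mInner, liou, LinearMap.smul_apply, LinearMap.sub_apply, LinearMap.mulLeft_apply,
    LinearMap.mulRight_apply, Matrix.conjTranspose_smul, Matrix.conjTranspose_sub,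
    Matrix.conjTranspose_mul, hH.eq, Matrix.smul_mul, Matrix.mul_smul, Matrix.trace_smul,
    Matrix.mul_sub, Matrix.sub_mul, Matrix.trace_sub, hc, Matrix.mul_assoc]
  simp

/-! ### Clifford algebra -/

theorem psi_sq {N : ℕ} (ψ : Fin N → MM N)
    (hanti : ∀ i j, ψ i * ψ j + ψ j * ψ i = (if i = j then (2 : ℂ) else 0) • (1 : MM N))
    (i : Fin N) : ψ i * ψ i = 1 := by
  have h := hanti i i
  simp only [if_true] at h
  rw [← two_smul ℂ] at h
  exact smul_right_injective _ (two_ne_zero : (2 : ℂ) ≠ 0) h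

theorem psi_comm_list {N : ℕ} (ψ : Fin N → MM N)
    (hanti : ∀ i j, ψ i * ψ j + ψ j * ψ i = (if i = j then (2 : ℂ) else 0) • (1 : MM N))
    (i : Fin N) (l : List (Fin N)) :
    ψ i * (l.map ψ).prod = ((-1 : ℂ) ^ (l.length + l.count i)) • ((l.map ψ).prod * ψ i) := by
  induction l with
  | nil => simp
  | cons j l ih =>
    rw [List.map_cons, List.prod_cons, List.length_cons, List.count_cons]
    by_cases h : i = j
    · subst h
      have e : l.length + 1 + (l.count i + if (i == i) = true then 1 else 0)
          = l.length + l.count i + 2 := by simp; ring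
      rw [e, pow_add _ _ 2, ih, Matrix.smul_mul, Matrix.mul_smul]
      rw [Matrix.mul_assoc, ← Matrix.mul_assoc (ψ i) _ (ψ i), ih]
      simp [Matrix.mul_assoc]
    · have h2 : ψ i * ψ j = - (ψ j * ψ i) := by
        have := hanti i j
        rw [if_neg h, zero_smul] at this
        exact eq_neg_of_add_eq_zero_left this
      have e : l.length + 1 + (l.count i + if (j == i) = true then 1 else 0)
          = l.length + l.count i + 1 := by
        have : ¬ j = i := fun h' => h h'.symm
        simp [this]; ring
      rw [← Matrix.mul_assoc, h2, Matrix.neg_mul, Matrix.mul_assoc, ih, e, pow_succ,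
        Matrix.mul_smul, Matrix.mul_assoc]
      simp

theorem psi_list_unitary {N : ℕ} (ψ : Fin N → MM N) (hherm : ∀ i, (ψ i).IsHermitian)
    (hanti : ∀ i j, ψ i * ψ j + ψ j * ψ i = (if i = j then (2 : ℂ) else 0) • (1 : MM N))
    (l : List (Fin N)) : ((l.map ψ).prod)ᴴ * (l.map ψ).prod = 1 := by
  induction l with
  | nil => simp
  | cons j l ih =>
    rw [List.map_cons, List.prod_cons, Matrix.conjTranspose_mul, (hherm j).eq, Matrix.mul_assoc,
      ← Matrix.mul_assoc (ψ j), psi_sq ψ hanti, Matrix.one_mul, ih]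

theorem psiProd_comm {N : ℕ} (ψ : Fin N → MM N)
    (hanti : ∀ i j, ψ i * ψ j + ψ j * ψ i = (if i = j then (2 : ℂ) else 0) • (1 : MM N))
    (i : Fin N) (Y : Finset (Fin N)) :
    ψ i * psiProd ψ Y = ((-1 : ℂ) ^ (Y.card + if i ∈ Y then 1 else 0)) • (psiProd ψ Y * ψ i) := by
  have h := psi_comm_list ψ hanti i (Y.sort (· ≤ ·))
  rw [List.Nodup.count (Finset.sort_nodup _ _)] at h
  simpa [psiProd] using h

theorem exists_odd {N : ℕ} (hN : Even N) (Y Z : Finset (Fin N)) (h : Y ≠ Z) :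
    ∃ i, Odd ((Y.card + if i ∈ Y then 1 else 0) + (Z.card + if i ∈ Z then 1 else 0)) := by
  have hc : (symmDiff Y Z).card + 2 * (Y ∩ Z).card = Y.card + Z.card := by
    have h1 := Finset.card_sdiff_add_card_inter Y Z
    have h2 := Finset.card_sdiff_add_card_inter Z Y
    have h3 : (symmDiff Y Z).card = (Y \ Z).card + (Z \ Y).card := by
      rw [symmDiff_def]
      exact Finset.card_union_of_disjoint disjoint_sdiff_sdiff
    rw [Finset.inter_comm] at h2
    omega
  rcases Nat.even_or_odd (Y.card + Z.card) with he | ho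
  · have : (symmDiff Y Z).Nonempty := by
      rw [Finset.nonempty_iff_ne_empty]
      intro h0
      exact h (symmDiff_eq_bot.1 h0)
    obtain ⟨i, hi⟩ := this
    refine ⟨i, ?_⟩
    rw [Finset.mem_symmDiff] at hi
    rcases hi with ⟨a, b⟩ | ⟨a, b⟩ <;> simp only [a, b, if_true, if_false] <;>
      rw [Nat.even_iff] at he <;> rw [Nat.odd_iff] <;> omega
  · have : symmDiff Y Z ≠ Finset.univ := by
      intro h0
      rw [h0, Finset.card_univ, Fintype.card_fin] at hc
      rw [Nat.odd_iff] at ho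
      rw [Nat.even_iff] at hN
      omega
    obtain ⟨i, hi⟩ : ∃ i, i ∉ symmDiff Y Z := by
      by_contra hcon
      push Not at hcon
      exact this (Finset.eq_univ_iff_forall.2 hcon)
    refine ⟨i, ?_⟩
    rw [Finset.mem_symmDiff] at hi
    rw [Nat.odd_iff] at ho ⊢
    by_cases a : i ∈ Y <;> by_cases b : i ∈ Z <;> simp [a, b] at hi ⊢ <;> omega

theorem psiProd_orth {N : ℕ} (hN : Even N) (ψ : Fin N → MM N) (hherm : ∀ i, (ψ i).IsHermitian)
    (hanti : ∀ i j, ψ i * ψ j + ψ j * ψ i = (if i = j then (2 : ℂ) else 0) • (1 : MM N))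
    (Y Z : Finset (Fin N)) (h : Y ≠ Z) : mInner N (psiProd ψ Y) (psiProd ψ Z) = 0 := by
  obtain ⟨i, hi⟩ := exists_odd hN Y Z h
  have hY := congrArg Matrix.conjTranspose (psiProd_comm ψ hanti i Y)
  have hZ := psiProd_comm ψ hanti i Z
  have hsq := psi_sq ψ hanti i
  set a := Y.card + if i ∈ Y then 1 else 0
  set b := Z.card + if i ∈ Z then 1 else 0
  set P := psiProd ψ Y
  set Q := psiProd ψ Z
  rw [Matrix.conjTranspose_mul, Matrix.conjTranspose_smul, Matrix.conjTranspose_mul,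
    (hherm i).eq] at hY
  have hs : star ((-1 : ℂ) ^ a) = (-1) ^ a := by simp
  rw [hs] at hY
  have key : (Pᴴ * Q).trace = - (Pᴴ * Q).trace := by
    calc (Pᴴ * Q).trace = ((Pᴴ * ψ i) * (ψ i * Q)).trace := by
          rw [Matrix.mul_assoc, ← Matrix.mul_assoc (ψ i), hsq, Matrix.one_mul]
      _ = (-1 : ℂ) ^ (a + b) * ((ψ i * Pᴴ * (Q * ψ i)).trace) := by
          rw [hY, hZ, Matrix.smul_mul, Matrix.mul_smul, Matrix.trace_smul, Matrix.trace_smul,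
            smul_eq_mul, smul_eq_mul, pow_add _ a b, mul_assoc ((-1 : ℂ) ^ a)]
      _ = - (Pᴴ * Q).trace := by
          rw [hi.neg_one_pow, Matrix.mul_assoc, Matrix.trace_mul_comm, Matrix.mul_assoc,
            Matrix.mul_assoc, hsq, Matrix.mul_one, neg_one_mul]
  have : (Pᴴ * Q).trace = 0 := self_eq_neg.1 key
  simp [mInner, this]

theorem psiProd_self {N : ℕ} (ψ : Fin N → MM N) (hherm : ∀ i, (ψ i).IsHermitian)
    (hanti : ∀ i j, ψ i * ψ j + ψ j * ψ i = (if i = j then (2 : ℂ) else 0) • (1 : MM N))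
    (Y : Finset (Fin N)) : mInner N (psiProd ψ Y) (psiProd ψ Y) = 1 := by
  rw [mInner, psiProd, psi_list_unitary ψ hherm hanti]
  simp

theorem psiProd_span {N : ℕ} (hN : Even N) (ψ : Fin N → MM N) (hherm : ∀ i, (ψ i).IsHermitian)
    (hanti : ∀ i j, ψ i * ψ j + ψ j * ψ i = (if i = j then (2 : ℂ) else 0) • (1 : MM N)) :
    Submodule.span ℂ (Set.range (psiProd ψ)) = ⊤ := by
  have hli : LinearIndependent ℂ (psiProd ψ) := by
    rw [Fintype.linearIndependent_iff]
    intro g hg Z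
    have h := congrArg (mInner N (psiProd ψ Z)) hg
    rw [mInner_sum_right, Finset.sum_eq_single Z] at h
    · rw [mInner_smul_right, psiProd_self ψ hherm hanti] at h
      simpa [mInner] using h
    · intro Y _ hY
      rw [mInner_smul_right, psiProd_orth hN ψ hherm hanti Z Y hY.symm, mul_zero]
    · simp
  apply hli.span_eq_top_of_card_eq_finrank'
  obtain ⟨k, rfl⟩ := hN
  have : (k + k) / 2 = k := by omega
  simp [Module.finrank_matrix, this, pow_add]

theorem eq_zero_of_orth {N : ℕ} (hN : Even N) (ψ : Fin N → MM N)
    (hherm : ∀ i, (ψ i).IsHermitian)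
    (hanti : ∀ i j, ψ i * ψ j + ψ j * ψ i = (if i = j then (2 : ℂ) else 0) • (1 : MM N))
    (D : MM N) (h : ∀ Y, mInner N D (psiProd ψ Y) = 0) : D = 0 := by
  apply (mCore N).definite
  change mInner N D D = 0
  have hD : D ∈ Submodule.span ℂ (Set.range (psiProd ψ)) := by
    rw [psiProd_span hN ψ hherm hanti]; trivial
  have : ∀ X ∈ Submodule.span ℂ (Set.range (psiProd ψ)), mInner N D X = 0 := by
    intro X hX
    induction hX using Submodule.span_induction with
    | mem x hx => obtain ⟨Y, rfl⟩ := hx; exact h Y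
    | zero => simp [mInner]
    | add x y _ _ hx hy => rw [mInner_add_right, hx, hy, add_zero]
    | smul a x _ hx => rw [mInner_smul_right, hx, mul_zero]
  exact this D hD

theorem sizeSpan_orth {N : ℕ} (hN : Even N) (ψ : Fin N → MM N) (hherm : ∀ i, (ψ i).IsHermitian)
    (hanti : ∀ i j, ψ i * ψ j + ψ j * ψ i = (if i = j then (2 : ℂ) else 0) • (1 : MM N))
    (s : ℕ) (Y : Finset (Fin N)) (hY : Y.card ≠ s) (X : MM N) (hX : X ∈ sizeSpan ψ s) :
    mInner N (psiProd ψ Y) X = 0 := by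
  unfold sizeSpan at hX
  induction hX using Submodule.span_induction with
  | mem x hx =>
    obtain ⟨Z, hZ, rfl⟩ := hx
    exact psiProd_orth hN ψ hherm hanti Y Z (by rintro rfl; exact hY hZ)
  | zero => simp [mInner]
  | add x y _ _ hx hy => rw [mInner_add_right, hx, hy, add_zero]
  | smul a x _ hx => rw [mInner_smul_right, hx, mul_zero]

theorem sum_Qs {N : ℕ} (hN : Even N) (ψ : Fin N → MM N) (hherm : ∀ i, (ψ i).IsHermitian)
    (hanti : ∀ i j, ψ i * ψ j + ψ j * ψ i = (if i = j then (2 : ℂ) else 0) • (1 : MM N))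
    (Qs : ℕ → (MM N →ₗ[ℂ] MM N))
    (hQmem : ∀ s A, Qs s A ∈ sizeSpan ψ s)
    (hQorth : ∀ s A, ∀ B ∈ sizeSpan ψ s, mInner N B (A - Qs s A) = 0) (A : MM N) :
    A = ∑ s ∈ Finset.range (N + 1), Qs s A := by
  rw [← sub_eq_zero]
  apply eq_zero_of_orth hN ψ hherm hanti
  intro Y
  rw [← mInner_symm, mInner_sub_right, mInner_sum_right, Finset.sum_eq_single Y.card]
  · rw [← mInner_sub_right, hQorth _ _ _ (Submodule.subset_span ⟨Y, rfl, rfl⟩), star_zero]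
  · intro s _ hs
    exact sizeSpan_orth hN ψ hherm hanti s Y hs.symm _ (hQmem s A)
  · intro h
    have := Finset.card_le_univ Y
    simp at h this
    omega

/-! ### Derivatives -/

section Deriv
attribute [local instance] Matrix.linftyOpNormedRing Matrix.linftyOpNormedAlgebra

theorem heis_hasDerivAt {N : ℕ} (H O₀ : MM N) (t : ℝ) :
    HasDerivAt (heis H O₀) (liou H (heis H O₀ t)) t := by
  have h1 := hasDerivAt_exp_smul_const' (𝕂 := ℝ) (Complex.I • H) t
  have h2 := hasDerivAt_exp_smul_const (𝕂 := ℝ) (-(Complex.I • H)) t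
  have h3 := (h1.mul_const O₀).mul h2
  have e1 : ∀ u : ℝ, u • (Complex.I • H) = (Complex.I * u) • H := by
    intro u
    rw [mul_comm, mul_smul]; rfl
  have e2 : ∀ u : ℝ, u • (-(Complex.I • H)) = (-(Complex.I * u)) • H := by
    intro u
    rw [smul_neg, e1, neg_smul]
  simp only [e1, e2] at h3
  refine HasDerivAt.congr_deriv (f := heis H O₀) h3 ?_
  simp only [liou, heis, LinearMap.smul_apply, LinearMap.sub_apply, LinearMap.mulLeft_apply,
    LinearMap.mulRight_apply, Matrix.smul_mul, Matrix.mul_neg, Matrix.mul_smul, smul_sub,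
    Matrix.mul_assoc]
  exact (sub_eq_add_neg _ _).symm

theorem prob_hasDerivAt {N : ℕ} (Q : MM N →ₗ[ℂ] MM N) (f : ℝ → MM N) (f' : MM N) (t : ℝ)
    (hf : HasDerivAt f f' t) :
    HasDerivAt (fun τ => (mInner N (f τ) (Q (f τ))).re)
      ((mInner N f' (Q (f t))).re + (mInner N (f t) (Q f')).re) t := by
  let S : MM N →ₗ[ℝ] MM N :=
    { toFun := fun A => Aᴴ
      map_add' := fun A B => Matrix.conjTranspose_add A B
      map_smul' := fun c A => by ext i j; simp }
  have hs : HasDerivAt (fun τ => (f τ)ᴴ) (f'ᴴ) t :=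
    (LinearMap.toContinuousLinearMap S).hasFDerivAt.comp_hasDerivAt t hf
  have hQ : HasDerivAt (fun τ => Q (f τ)) (Q f') t :=
    (LinearMap.toContinuousLinearMap (Q.restrictScalars ℝ)).hasFDerivAt.comp_hasDerivAt t hf
  have hm := hs.mul hQ
  let T : MM N →ₗ[ℝ] ℝ := Complex.reLm ∘ₗ
    ((((2 : ℂ) ^ (N / 2))⁻¹ • Matrix.traceLinearMap (Fin (2 ^ (N / 2))) ℂ ℂ).restrictScalars ℝ)
  have := (LinearMap.toContinuousLinearMap T).hasFDerivAt.comp_hasDerivAt t hm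
  refine HasDerivAt.congr_deriv (f := fun τ => (mInner N (f τ) (Q (f τ))).re) this ?_
  change (((2 : ℂ) ^ (N / 2))⁻¹ * (f'ᴴ * Q (f t) + (f t)ᴴ * Q f').trace).re = _
  rw [Matrix.trace_add, mul_add, Complex.add_re]
  rfl

end Deriv

/-- The size probabilities obey a continuous-time quantum walk with transition rates bounded
by `𝒦_{s′s} := ‖Q_{s′} ∘ L ∘ Q_s‖`. -/
theorem size_distribution_quantum_walk {N : ℕ} (hNpos : 0 < N) (hNeven : Even N)
    (ψ : Fin N → Matrix (Fin (2 ^ (N / 2))) (Fin (2 ^ (N / 2))) ℂ)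
    (hherm : ∀ i, (ψ i).IsHermitian)
    (hanti : ∀ i j, ψ i * ψ j + ψ j * ψ i =
      (if i = j then (2 : ℂ) else 0) • (1 : Matrix (Fin (2 ^ (N / 2))) (Fin (2 ^ (N / 2))) ℂ))
    -- `Qs s` is the orthogonal projection onto the span of `{ψ_Y : |Y| = s}`:
    (Qs : ℕ → (Matrix (Fin (2 ^ (N / 2))) (Fin (2 ^ (N / 2))) ℂ →ₗ[ℂ]
      Matrix (Fin (2 ^ (N / 2))) (Fin (2 ^ (N / 2))) ℂ))
    (hQmem : ∀ s A, Qs s A ∈ sizeSpan ψ s)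
    (hQorth : ∀ s A, ∀ B ∈ sizeSpan ψ s, mInner N B (A - Qs s A) = 0)
    (H O₀ : Matrix (Fin (2 ^ (N / 2))) (Fin (2 ^ (N / 2))) ℂ)
    (hH : H.IsHermitian) (hO₀ : mInner N O₀ O₀ = 1) :
    ∃ K : ℕ → ℕ → ℝ → ℝ,
      (∀ s s' : ℕ, s < s' → s' ≤ N → ∀ t : ℝ,
        |K s' s t| ≤ opNorm N (Qs s' ∘ₗ liou H ∘ₗ Qs s)) ∧
      (∀ s ≤ N, ∀ t : ℝ,
        HasDerivAt (fun τ : ℝ => (mInner N (heis H O₀ τ) (Qs s (heis H O₀ τ))).re)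
          (2 * Real.sqrt (mInner N (heis H O₀ t) (Qs s (heis H O₀ t))).re *
            ((∑ s' ∈ Finset.range s,
                K s s' t * Real.sqrt (mInner N (heis H O₀ t) (Qs s' (heis H O₀ t))).re) -
             (∑ s' ∈ Finset.Ioc s N,
                K s' s t * Real.sqrt (mInner N (heis H O₀ t) (Qs s' (heis H O₀ t))).re))) t) := by
  have hself : ∀ s A B, mInner N A (Qs s B) = mInner N (Qs s A) (Qs s B) := by
    intro s A B
    have h := hQorth s A _ (hQmem s B)
    rw [mInner_sub_right, sub_eq_zero] at h
    rw [← mInner_symm, h, mInner_symm]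
  have hself2 : ∀ s A B, mInner N (Qs s A) (Qs s B) = mInner N (Qs s A) B := by
    intro s A B
    have h := hQorth s B _ (hQmem s A)
    rw [mInner_sub_right, sub_eq_zero] at h
    exact h.symm
  set O := heis H O₀ with hO
  have hsq : ∀ s t, Real.sqrt (mInner N (O t) (Qs s (O t))).re = mNorm N (Qs s (O t)) := by
    intro s t
    rw [hself, mNorm]
  have hidem : ∀ s A, Qs s (Qs s A) = Qs s A := by
    intro s A
    have h : mInner N (Qs s A - Qs s (Qs s A)) (Qs s A - Qs s (Qs s A)) = 0 :=
      hQorth s (Qs s A) _ (Submodule.sub_mem _ (hQmem _ _) (hQmem _ _))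
    exact (sub_eq_zero.1 ((mCore N).definite _ h)).symm
  let a : ℕ → ℕ → ℝ → ℝ := fun s' s t => (mInner N (Qs s' (O t)) (liou H (Qs s (O t)))).re
  have hbound : ∀ s' s t, |a s' s t| ≤ opNorm N (Qs s' ∘ₗ liou H ∘ₗ Qs s) *
      (mNorm N (Qs s' (O t)) * mNorm N (Qs s (O t))) := by
    intro s' s t
    have h1 : a s' s t = (mInner N (Qs s' (O t))
        ((Qs s' ∘ₗ liou H ∘ₗ Qs s) (Qs s (O t)))).re := by
      simp only [a, LinearMap.comp_apply, hidem, hself2]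
    rw [h1]
    refine (mInner_re_le N _ _).trans ?_
    have h2 := le_opNorm_mul N (Qs s' ∘ₗ liou H ∘ₗ Qs s) (Qs s (O t))
    have h3 : 0 ≤ mNorm N (Qs s' (O t)) := Real.sqrt_nonneg _
    calc _ ≤ mNorm N (Qs s' (O t)) * _ := mul_le_mul_of_nonneg_left h2 h3
      _ = _ := by ring
  let K : ℕ → ℕ → ℝ → ℝ := fun s' s t =>
    a s' s t / (mNorm N (Qs s' (O t)) * mNorm N (Qs s (O t)))
  have hK : ∀ s' s t, mNorm N (Qs s' (O t)) * (K s' s t * mNorm N (Qs s (O t))) = a s' s t := by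
    intro s' s t
    by_cases h : mNorm N (Qs s' (O t)) * mNorm N (Qs s (O t)) = 0
    · have hb := hbound s' s t
      rw [h, mul_zero] at hb
      have h0 : a s' s t = 0 := abs_eq_zero.1 (le_antisymm hb (abs_nonneg _))
      simp [K, h0]
    · calc _ = K s' s t * (mNorm N (Qs s' (O t)) * mNorm N (Qs s (O t))) := by ring
        _ = _ := div_mul_cancel₀ _ h
  refine ⟨K, ?_, ?_⟩
  · intro s s' _ _ t
    have hnn : 0 ≤ mNorm N (Qs s' (O t)) * mNorm N (Qs s (O t)) :=
      mul_nonneg (Real.sqrt_nonneg _) (Real.sqrt_nonneg _)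
    simp only [K]
    rw [abs_div, abs_of_nonneg hnn]
    exact div_le_of_le_mul₀ hnn (opNorm_nonneg_aux _ _) (hbound s' s t)
  · intro s hs t
    have hd := prob_hasDerivAt (Qs s) O _ t (heis_hasDerivAt H O₀ t)
    simp only [hsq]
    convert hd using 1
    have e1 : (mInner N (liou H (O t)) (Qs s (O t))).re
        = (mInner N (Qs s (O t)) (liou H (O t))).re := mInner_symm_re _ _ _
    have e2 : (mInner N (O t) (Qs s (liou H (O t)))).re
        = (mInner N (Qs s (O t)) (liou H (O t))).re := by rw [hself, hself2]
    have e3 : (mInner N (Qs s (O t)) (liou H (O t))).re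
        = ∑ s' ∈ Finset.range (N + 1), a s s' t := by
      have h := congrArg (fun X => (mInner N (Qs s (O t)) (liou H X)).re)
        (sum_Qs hNeven ψ hherm hanti Qs hQmem hQorth (O t))
      simp only [map_sum, mInner_sum_right, Complex.re_sum] at h
      exact h
    have hneg : ∀ s' , a s s' t = - a s' s t := fun s' => liou_anti N H hH _ _
    have e4 : ∑ s' ∈ Finset.range (N + 1), a s s' t
        = ∑ s' ∈ Finset.range s, a s s' t - ∑ s' ∈ Finset.Ioc s N, a s' s t := by
      have hss : a s s t = 0 := self_eq_neg.1 (hneg s)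
      have hIoc : Finset.Ioc s N = Finset.Ico (s + 1) (N + 1) := by
        ext x; simp only [Finset.mem_Ioc, Finset.mem_Ico]; omega
      rw [← Finset.sum_range_add_sum_Ico _ (by omega : s + 1 ≤ N + 1), Finset.sum_range_succ, hss,
        add_zero, hIoc, sub_eq_add_neg, ← Finset.sum_neg_distrib]
      congr 1
      exact Finset.sum_congr rfl fun s' _ => hneg s'
    rw [e1, e2, e3, e4, ← two_mul, mul_assoc, mul_sub, Finset.mul_sum, Finset.mul_sum]
    congr 2
    · exact Finset.sum_congr rfl fun s' _ => (hK s s' t).symm ▸ rfl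
    · refine Finset.sum_congr rfl fun s' _ => ?_
      rw [← hK s' s t]; ring
end

section
/- Let W be a finite-dimensional complex inner product space, let {Q_s}_{s∈S} be a finite family of pairwise orthogonal projections (Q_s Q_{s′} = 0 for s ≠ s′), let R and R′ be disjoint subsets of S, and set Q_R := Σ_{s∈R} Q_s and Q_{R′} := Σ_{s′∈R′} Q_{s′}. Then for any linear map L on W, the operator norm satisfies ‖Q_{R′} L Q_R‖ ≤ max( max_{s∈R} Σ_{s′∈R′} ‖Q_{s′} L Q_s‖ , max_{s′∈R′} Σ_{s∈R} ‖Q_{s′} L Q_s‖ ). -/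
theorem block_bessel {W : Type*} [NormedAddCommGroup W] [InnerProductSpace ℂ W]
    {S : Type*} [DecidableEq S]
    (Q : S → W →L[ℂ] W)
    (hidem : ∀ s x, Q s (Q s x) = Q s x)
    (horth : ∀ s s', s ≠ s' → ∀ x, Q s (Q s' x) = 0)
    (hsa : ∀ s (x y : W), (inner ℂ (Q s x) y : ℂ) = (inner ℂ x (Q s y) : ℂ))
    (R : Finset S) (x : W) : ∑ s ∈ R, ‖Q s x‖ ^ 2 ≤ ‖x‖ ^ 2 := by
  have hn : ∀ s, RCLike.re (inner ℂ x (Q s x)) = ‖Q s x‖ ^ 2 := by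
    intro s
    rw [← inner_self_eq_norm_sq (𝕜 := ℂ) (Q s x), hsa, hidem]
  have h1 : RCLike.re (inner ℂ x (∑ s ∈ R, Q s x)) = ∑ s ∈ R, ‖Q s x‖ ^ 2 := by
    rw [inner_sum, map_sum]
    exact Finset.sum_congr rfl fun s _ => hn s
  have h2 : ‖∑ s ∈ R, Q s x‖ ^ 2 = ∑ s ∈ R, ‖Q s x‖ ^ 2 := by
    rw [← inner_self_eq_norm_sq (𝕜 := ℂ), sum_inner, map_sum]
    refine Finset.sum_congr rfl fun s hs => ?_
    rw [hsa, map_sum, Finset.sum_eq_single s, hidem, hn]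
    · intro b _ hb
      exact horth s b hb.symm x
    · intro h
      exact absurd hs h
  have h3 := norm_sub_sq (𝕜 := ℂ) x (∑ s ∈ R, Q s x)
  rw [h1, h2] at h3
  nlinarith [sq_nonneg ‖x - ∑ s ∈ R, Q s x‖]

theorem block_le_iSup {S : Type*} [Fintype S] (R : Finset S) (f : S → ℝ)
    (s : S) (hs : s ∈ R) : f s ≤ ⨆ s ∈ R, f s := by
  have h := le_ciSup (f := fun s => ⨆ _ : s ∈ R, f s) (Set.finite_range _).bddAbove s
  simpa [hs] using h


/-- For a finite family of pairwise-orthogonal (idempotent, self-adjoint) projections `Q_s` on a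
finite-dimensional complex inner product space, and disjoint index sets `R, R′`, the operator
norm of `Q_{R′} L Q_R` is bounded by
`max( max_{s∈R} Σ_{s′∈R′} ‖Q_{s′} L Q_s‖ , max_{s′∈R′} Σ_{s∈R} ‖Q_{s′} L Q_s‖ )`. -/
theorem block_opNorm_bound {W : Type*} [NormedAddCommGroup W] [InnerProductSpace ℂ W]
    [FiniteDimensional ℂ W] {S : Type*} [Fintype S] [DecidableEq S]
    (Q : S → W →L[ℂ] W)
    (hidem : ∀ s, (Q s).comp (Q s) = Q s)
    (horth : ∀ s s', s ≠ s' → (Q s).comp (Q s') = 0)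
    (hsa : ∀ s (x y : W), (inner ℂ (Q s x) y : ℂ) = (inner ℂ x (Q s y) : ℂ))
    (R R' : Finset S) (hRR' : Disjoint R R') (L : W →L[ℂ] W) :
    ‖(∑ s' ∈ R', Q s').comp (L.comp (∑ s ∈ R, Q s))‖ ≤
      max (⨆ s ∈ R, ∑ s' ∈ R', ‖(Q s').comp (L.comp (Q s))‖)
          (⨆ s' ∈ R', ∑ s ∈ R, ‖(Q s').comp (L.comp (Q s))‖) := by
  have hid : ∀ s x, Q s (Q s x) = Q s x := fun s x => by
    simpa using congrArg (fun T : W →L[ℂ] W => T x) (hidem s)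
  have hor : ∀ s s', s ≠ s' → ∀ x, Q s (Q s' x) = 0 := fun s s' h x => by
    simpa using congrArg (fun T : W →L[ℂ] W => T x) (horth s s' h)
  set a : S → S → ℝ := fun s s' => ‖(Q s').comp (L.comp (Q s))‖ with ha
  have ha0 : ∀ s s', 0 ≤ a s s' := fun s s' => norm_nonneg _
  set M := max (⨆ s ∈ R, ∑ s' ∈ R', a s s') (⨆ s' ∈ R', ∑ s ∈ R, a s s') with hM
  have hM1 : ∀ s ∈ R, ∑ s' ∈ R', a s s' ≤ M := fun s hs =>
    (block_le_iSup R (fun s => ∑ s' ∈ R', a s s') s hs).trans (le_max_left _ _)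
  have hM2 : ∀ s' ∈ R', ∑ s ∈ R, a s s' ≤ M := fun s hs =>
    (block_le_iSup R' (fun s' => ∑ s ∈ R, a s s') s hs).trans (le_max_right _ _)
  have hM0 : 0 ≤ M := le_max_of_le_left <| Real.iSup_nonneg fun s => Real.iSup_nonneg fun _ =>
    Finset.sum_nonneg fun s' _ => ha0 s s'
  refine ContinuousLinearMap.opNorm_le_bound _ hM0 fun x => ?_
  set y := ((∑ s' ∈ R', Q s').comp (L.comp (∑ s ∈ R, Q s))) x with hy
  have hy' : y = ∑ s' ∈ R', ∑ s ∈ R, Q s' (L (Q s x)) := by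
    simp [hy, map_sum]
    exact Finset.sum_comm
  have hterm : ∀ s s', RCLike.re (inner ℂ y (Q s' (L (Q s x)))) ≤
      a s s' * (‖Q s' y‖ * ‖Q s x‖) := by
    intro s s'
    rw [← hid s', ← hsa]
    refine (re_inner_le_norm _ _).trans ?_
    have h := ((Q s').comp (L.comp (Q s))).le_opNorm (Q s x)
    simp only [ContinuousLinearMap.comp_apply, hid] at h
    calc _ ≤ ‖Q s' y‖ * (a s s' * ‖Q s x‖) := by gcongr
      _ = _ := by ring
  have hyy : ‖y‖ ^ 2 ≤ ∑ s' ∈ R', ∑ s ∈ R, a s s' * (‖Q s' y‖ * ‖Q s x‖) := by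
    have h : ‖y‖ ^ 2 = RCLike.re (inner ℂ y (∑ s' ∈ R', ∑ s ∈ R, Q s' (L (Q s x)))) := by
      rw [← hy', inner_self_eq_norm_sq]
    rw [h, inner_sum, map_sum]
    refine Finset.sum_le_sum fun s' _ => ?_
    rw [inner_sum, map_sum]
    exact Finset.sum_le_sum fun s _ => hterm s s'
  have hA : ∑ s' ∈ R', ∑ s ∈ R, a s s' * ‖Q s' y‖ ^ 2 ≤ M * ‖y‖ ^ 2 := by
    calc _ ≤ ∑ s' ∈ R', M * ‖Q s' y‖ ^ 2 := by
          refine Finset.sum_le_sum fun s' hs' => ?_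
          rw [← Finset.sum_mul]
          exact mul_le_mul_of_nonneg_right (hM2 s' hs') (sq_nonneg _)
      _ ≤ _ := by
          rw [← Finset.mul_sum]
          exact mul_le_mul_of_nonneg_left (block_bessel Q hid hor hsa R' y) hM0
  have hB : ∑ s' ∈ R', ∑ s ∈ R, a s s' * ‖Q s x‖ ^ 2 ≤ M * ‖x‖ ^ 2 := by
    rw [Finset.sum_comm]
    calc _ ≤ ∑ s ∈ R, M * ‖Q s x‖ ^ 2 := by
          refine Finset.sum_le_sum fun s hs => ?_
          rw [← Finset.sum_mul]
          exact mul_le_mul_of_nonneg_right (hM1 s hs) (sq_nonneg _)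
      _ ≤ _ := by
          rw [← Finset.mul_sum]
          exact mul_le_mul_of_nonneg_left (block_bessel Q hid hor hsa R x) hM0
  have hC : 2 * (‖x‖ * ‖y‖) * ∑ s' ∈ R', ∑ s ∈ R, a s s' * (‖Q s' y‖ * ‖Q s x‖) ≤
      ‖x‖ ^ 2 * (∑ s' ∈ R', ∑ s ∈ R, a s s' * ‖Q s' y‖ ^ 2) +
      ‖y‖ ^ 2 * (∑ s' ∈ R', ∑ s ∈ R, a s s' * ‖Q s x‖ ^ 2) := by
    simp only [Finset.mul_sum, ← Finset.sum_add_distrib]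
    refine Finset.sum_le_sum fun s' _ => Finset.sum_le_sum fun s _ => ?_
    have := mul_nonneg (ha0 s s') (sq_nonneg (‖x‖ * ‖Q s' y‖ - ‖y‖ * ‖Q s x‖))
    linarith
  rcases eq_or_ne x 0 with hx | hx
  · simp [hy, hx]
  rcases eq_or_ne y 0 with hy0 | hy0
  · rw [hy0, norm_zero]
    positivity
  have hxp : 0 < ‖x‖ := norm_pos_iff.2 hx
  have hyp : 0 < ‖y‖ := norm_pos_iff.2 hy0
  have h1 := mul_le_mul_of_nonneg_left hyy (by positivity : 0 ≤ 2 * (‖x‖ * ‖y‖))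
  have h2 := mul_le_mul_of_nonneg_left hA (by positivity : 0 ≤ ‖x‖ ^ 2)
  have h3 := mul_le_mul_of_nonneg_left hB (by positivity : 0 ≤ ‖y‖ ^ 2)
  have h4 : (2 * ‖x‖ * ‖y‖ ^ 2) * ‖y‖ ≤ (2 * ‖x‖ * ‖y‖ ^ 2) * (M * ‖x‖) := by linarith
  exact le_of_mul_le_mul_left h4 (by positivity)
end
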